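/- arXiv:1007.1697 — 2 statements merged into one kernel-verified Lean document; each statement's English description precedes it below -/
import Mathlib

section
/- Let p be a prime, n a positive integer, and S a separately cyclic linear subspace of F_p^n × F_p^n. Then S is totally isotropic with respect to the symplectic inner product if and only if for every two elements (a,b) and (c,d) of S the identity a(X)d(X^{−1}) = b(X)c(X^{−1}) holds in R = F_p[X]/(X^n−1). -/
open Polynomial

/-- The right cyclic shift `N` on `F_p^n`. -/
def shiftN {p n : ℕ} [NeZero n] (u : Fin n → ZMod p) : Fin n → ZMod p :=
  fun i => u (i - 1)

/-- The symplectic inner product of `(a,b)` and `(c,d)`, namely `aᵀd − bᵀc`. -/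
def sympInner {p n : ℕ} (u v : (Fin n → ZMod p) × (Fin n → ZMod p)) : ZMod p :=
  (∑ i, u.1 i * v.2 i) - (∑ i, u.2 i * v.1 i)

/-- The polynomial `u(X) = u_0 + u_1 X + … + u_{n−1} X^{n−1}` associated with a
vector `u ∈ F_p^n`. -/
noncomputable def vecPoly {p n : ℕ} (u : Fin n → ZMod p) : Polynomial (ZMod p) :=
  ∑ i : Fin n, Polynomial.monomial (i : ℕ) (u i)

/-- The canonical projection `F_p[X] → R = F_p[X]/(X^n − 1)`. -/
noncomputable def mkR (p n : ℕ) (q : Polynomial (ZMod p)) :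
    Polynomial (ZMod p) ⧸ Ideal.span {(X : Polynomial (ZMod p)) ^ n - 1} :=
  Ideal.Quotient.mk _ q

/-!
Pairing `a` with every translate of `d` gives the cross-correlation of `a` and `d`, and its values
are exactly the coefficients of `a(X) d(X⁻¹)` modulo `X ^ n - 1`. For a shift-invariant `S`,
isotropy can be tested against all translates at once, so it says that two cross-correlations
agree, which is the identity in the quotient ring because a vector is determined by the class of
its polynomial.
-/

open scoped translate Matrix

section CrossCorrelation

variable {G K : Type*} [AddCommGroup G] [Fintype G] [NonUnitalNonAssocSemiring K]

/-- The cross-correlation of `a` and `d` on a finite abelian group: its value at `k` is the dot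
product of `a` with `d` translated by `k`. No conjugation is applied to either argument. -/
def crossCorrelation (a d : G → K) : G → K := fun k => a ⬝ᵥ τ k d

lemma crossCorrelation_zero_apply (a d : G → K) : crossCorrelation a d 0 = a ⬝ᵥ d := by
  rw [crossCorrelation, translate_zero]

lemma forall_dotProduct_eq_iff_crossCorrelation_eq {S : Set ((G → K) × (G → K))}
    (hS : ∀ k, ∀ ab ∈ S, (τ k ab.1, τ k ab.2) ∈ S) :
    (∀ ab ∈ S, ∀ cd ∈ S, ab.1 ⬝ᵥ cd.2 = ab.2 ⬝ᵥ cd.1) ↔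
      ∀ ab ∈ S, ∀ cd ∈ S, crossCorrelation ab.1 cd.2 = crossCorrelation ab.2 cd.1 := by
  constructor
  · intro h ab hab cd hcd
    exact funext fun k => h ab hab _ (hS k cd hcd)
  · intro h ab hab cd hcd
    simpa only [crossCorrelation_zero_apply] using congrFun (h ab hab cd hcd) 0

end CrossCorrelation

lemma translate_mem_of_translate_one_mem {α β : Type*} {n : ℕ} [NeZero n]
    {S : Set ((Fin n → α) × (Fin n → β))} (hS : ∀ ab ∈ S, (τ 1 ab.1, τ 1 ab.2) ∈ S)
    (k : Fin n) : ∀ ab ∈ S, (τ k ab.1, τ k ab.2) ∈ S := by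
  obtain ⟨m, rfl⟩ := Nat.exists_eq_succ_of_ne_zero (NeZero.ne n)
  intro ab hab
  induction k using Fin.induction with
  | zero => simpa only [translate_zero] using hab
  | succ i ih =>
    simpa only [← Fin.coeSucc_eq_succ, translate_add'] using hS _ ih

section RootsOfUnity

variable {M : Type*} [Monoid M] {n : ℕ} {x : M}

lemma pow_val_add_of_pow_eq_one (hx : x ^ n = 1) (i j : Fin n) :
    x ^ (i + j).val = x ^ i.val * x ^ j.val := by
  rw [Fin.val_add, ← pow_eq_pow_mod _ hx, pow_add]

lemma pow_val_sub_of_pow_eq_one [NeZero n] (hx : x ^ n = 1) (i j : Fin n) :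
    x ^ (i - j).val = x ^ i.val * (x ^ (n - 1)) ^ j.val := by
  have cancel : x ^ j.val * (x ^ (n - 1)) ^ j.val = 1 := by
    rw [← (Commute.self_pow x _).mul_pow, mul_pow_sub_one (NeZero.ne n), hx, one_pow]
  calc x ^ (i - j).val = x ^ (i - j).val * (x ^ j.val * (x ^ (n - 1)) ^ j.val) := by
        rw [cancel, mul_one]
    _ = x ^ i.val * (x ^ (n - 1)) ^ j.val := by
        rw [← mul_assoc, ← pow_val_add_of_pow_eq_one hx, sub_add_cancel]

end RootsOfUnity

section Evaluation

variable {K A : Type*} [CommSemiring K] [DecidableEq K] [Semiring A] [Algebra K A] {n : ℕ}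

lemma aeval_ofFn (x : A) (u : Fin n → K) : aeval x (ofFn n u) = ∑ i, u i • x ^ i.val := by
  simp only [ofFn_eq_sum_monomial, map_sum, aeval_monomial, Algebra.smul_def]

lemma aeval_ofFn_mul_aeval_ofFn [NeZero n] {x : A} (hx : x ^ n = 1) (a d : Fin n → K) :
    aeval x (ofFn n a) * aeval (x ^ (n - 1)) (ofFn n d) =
      aeval x (ofFn n (crossCorrelation a d)) := by
  calc aeval x (ofFn n a) * aeval (x ^ (n - 1)) (ofFn n d)
      = ∑ i, ∑ j, (a i * d j) • x ^ (i - j).val := by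
        simp only [aeval_ofFn, Finset.sum_mul_sum, smul_mul_smul_comm,
          pow_val_sub_of_pow_eq_one hx]
    _ = ∑ i, ∑ k, (a i * d (i - k)) • x ^ k.val := by
        refine Finset.sum_congr rfl fun i _ => Fintype.sum_equiv (Equiv.subLeft i) _ _ fun j => ?_
        simp only [Equiv.subLeft_apply, sub_sub_cancel]
    _ = ∑ k, crossCorrelation a d k • x ^ k.val := by
        rw [Finset.sum_comm]
        simp only [crossCorrelation, dotProduct, translate_apply, Finset.sum_smul]
    _ = aeval x (ofFn n (crossCorrelation a d)) := (aeval_ofFn _ _).symm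

end Evaluation

section Quotient

lemma root_X_pow_sub_one_pow (K : Type*) [CommRing K] (n : ℕ) :
    AdjoinRoot.root (X ^ n - 1 : K[X]) ^ n = 1 := by
  rw [← sub_eq_zero, ← AdjoinRoot.mk_X, ← map_pow, ← map_one (AdjoinRoot.mk _), ← map_sub,
    AdjoinRoot.mk_self]

variable {K : Type*} [CommRing K] [DecidableEq K] {n : ℕ}

lemma mk_ofFn_injective_of_le_degree {f : K[X]} (hf : f.Monic) (hn : n ≤ f.degree) :
    Function.Injective fun u : Fin n → K => AdjoinRoot.mk f (ofFn n u) := by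
  intro u v huv
  refine sub_eq_zero.mp (injective_ofFn n ?_)
  by_contra hne
  rw [map_zero] at hne
  refine AdjoinRoot.mk_ne_zero_of_degree_lt hf hne ((ofFn_degree_lt _).trans_le hn) ?_
  rw [map_sub, map_sub, sub_eq_zero]
  exact huv

lemma mk_X_pow_sub_one_ofFn_injective [NeZero n] :
    Function.Injective fun u : Fin n → K => AdjoinRoot.mk (X ^ n - 1) (ofFn n u) := by
  nontriviality K
  refine mk_ofFn_injective_of_le_degree (monic_X_pow_sub_C 1 (NeZero.ne n)) ?_
  exact (degree_X_pow_sub_C (NeZero.pos n) 1).ge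

lemma mk_ofFn_mul_ofFn_comp_X_pow [NeZero n] (a d : Fin n → K) :
    AdjoinRoot.mk (X ^ n - 1) (ofFn n a * (ofFn n d).comp (X ^ (n - 1))) =
      AdjoinRoot.mk (X ^ n - 1) (ofFn n (crossCorrelation a d)) := by
  simp only [← AdjoinRoot.aeval_eq, map_mul, aeval_comp, map_pow, aeval_X]
  exact aeval_ofFn_mul_aeval_ofFn (root_X_pow_sub_one_pow K n) a d

theorem stmt_6_general [NeZero n] (S : Set ((Fin n → K) × (Fin n → K)))
    (hcyc : ∀ ab ∈ S, (τ 1 ab.1, τ 1 ab.2) ∈ S) :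
    (∀ ab ∈ S, ∀ cd ∈ S, ab.1 ⬝ᵥ cd.2 - ab.2 ⬝ᵥ cd.1 = 0) ↔
      ∀ ab ∈ S, ∀ cd ∈ S,
        AdjoinRoot.mk (X ^ n - 1) (ofFn n ab.1 * (ofFn n cd.2).comp (X ^ (n - 1))) =
          AdjoinRoot.mk (X ^ n - 1) (ofFn n ab.2 * (ofFn n cd.1).comp (X ^ (n - 1))) := by
  simp only [sub_eq_zero, mk_ofFn_mul_ofFn_comp_X_pow, mk_X_pow_sub_one_ofFn_injective.eq_iff]
  exact forall_dotProduct_eq_iff_crossCorrelation_eq (translate_mem_of_translate_one_mem hcyc)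

end Quotient

/-- A separately cyclic linear subspace `S` of `F_p^n × F_p^n` is
totally isotropic with respect to the symplectic inner product iff for all
`(a,b), (c,d) ∈ S` the identity `a(X)·d(X^{−1}) = b(X)·c(X^{−1})` holds in
`R = F_p[X]/(X^n−1)` (`X^{−1}` being the class of `X^{n−1}`). -/
theorem stmt_6 (p n : ℕ) [Fact p.Prime] [NeZero n]
    (S : Submodule (ZMod p) ((Fin n → ZMod p) × (Fin n → ZMod p)))
    (hcyc : ∀ ab ∈ S, (shiftN ab.1, shiftN ab.2) ∈ S) :
    (∀ ab ∈ S, ∀ cd ∈ S, sympInner ab cd = 0) ↔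
      ∀ ab ∈ S, ∀ cd ∈ S,
        mkR p n (vecPoly ab.1 * (vecPoly cd.2).comp (X ^ (n - 1))) =
          mkR p n (vecPoly ab.2 * (vecPoly cd.1).comp (X ^ (n - 1))) := by
  simp only [vecPoly, ← ofFn_eq_sum_monomial]
  exact stmt_6_general (K := ZMod p) (n := n) S hcyc
end

section
/- Let p be a prime and n a positive integer coprime to p. Let S be a totally isotropic, separately cyclic linear subspace of F_p^n × F_p^n generated by the triple (g,f,h), i.e., S viewed in R × R (R = F_p[X]/(X^n−1)) equals the set of pairs (a g, a f + b h) with a, b ranging over F_p[X], where g, h divide X^n − 1. Then the centraliser of S is exactly the set of pairs (c,d) in R × R such that: (1) c(X)h(X^{−1}) = c(X^{−1})h(X) = 0 in R, and (2) g(X)d(X^{−1}) = f(X)c(X^{−1}) in R. -/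
open Polynomial

/-!
Let `x` be the class of `X` in `R`, write `r*` for the image of `r` under `X ↦ X⁻¹`, and let `τ r`
be the constant coefficient of `r`. The powers `1, x, …, x ^ (n - 1)` are orthonormal for the
bilinear form `(r, s) ↦ τ (r s*)`, so `τ (u(X) v(X⁻¹))` is the dot product of `u` and `v`. The
symplectic product of `(c, d)` with `(a g, a f + b h)` is therefore
`τ (a (f c* - g d*) + b (c* h))`. As the form is nondegenerate, this vanishes for all `a` and `b`
exactly when `f c* = g d*` and `c* h = 0`; applying the involution to the latter gives `c h* = 0`.
-/

theorem dvd_val_add_pred_mul_val_iff {n : ℕ} [NeZero n] (i j : Fin n) :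
    n ∣ i + (n - 1) * j ↔ i = j := by
  rw [← ZMod.natCast_eq_zero_iff, Nat.cast_add, Nat.cast_mul, Nat.cast_pred (NeZero.pos n),
    ZMod.natCast_self, zero_sub, neg_one_mul, ← sub_eq_add_neg, sub_eq_zero,
    ZMod.natCast_eq_natCast_iff', Nat.mod_eq_of_lt i.isLt, Nat.mod_eq_of_lt j.isLt, Fin.val_inj]

theorem adjoinRoot_mk_monomial {A : Type*} [CommRing A] (f : A[X]) (k : ℕ) (a : A) :
    AdjoinRoot.mk f (monomial k a) = a • AdjoinRoot.root f ^ k := by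
  rw [← C_mul_X_pow_eq_monomial, map_mul, map_pow, AdjoinRoot.mk_X, AdjoinRoot.mk_C,
    Algebra.smul_def, AdjoinRoot.algebraMap_eq]

/-- The ring `A[X] / (X ^ n - 1)`, whose ideals are the cyclic codes of length `n` over `A`. -/
abbrev CyclicCodeRing (A : Type*) [CommRing A] (n : ℕ) : Type _ :=
  AdjoinRoot (X ^ n - 1 : A[X])

namespace CyclicCodeRing

open AdjoinRoot

variable {A : Type*} [CommRing A] {n : ℕ}

theorem root_pow_eq_one : root (X ^ n - 1 : A[X]) ^ n = 1 := by
  rw [← mk_X, ← map_pow, ← map_one (mk _), mk_eq_mk]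

/-- The class of `u₀ + u₁ X + … + uₙ₋₁ X ^ (n - 1)`, through which vectors are identified with
elements of `A[X] / (X ^ n - 1)`. -/
noncomputable def ofVec : (Fin n → A) →ₗ[A] CyclicCodeRing A n :=
  Fintype.linearCombination A fun i => root (X ^ n - 1 : A[X]) ^ (i : ℕ)

theorem ofVec_apply (u : Fin n → A) :
    ofVec u = ∑ i, u i • root (X ^ n - 1 : A[X]) ^ (i : ℕ) :=
  rfl

theorem ofVec_surjective [NeZero n] :
    Function.Surjective (ofVec : (Fin n → A) → CyclicCodeRing A n) := by
  intro r
  induction r using AdjoinRoot.induction_on with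
  | ih q =>
    induction q using Polynomial.induction_on' with
    | add q₁ q₂ h₁ h₂ =>
      obtain ⟨u, hu⟩ := h₁
      obtain ⟨v, hv⟩ := h₂
      exact ⟨u + v, by rw [map_add, map_add, hu, hv]⟩
    | monomial k a =>
      refine ⟨Pi.single (Fin.ofNat n k) a, ?_⟩
      rw [ofVec, Fintype.linearCombination_apply_single, adjoinRoot_mk_monomial,
        Fin.val_ofNat, ← pow_eq_pow_mod k root_pow_eq_one]

/-- The substitution `X ↦ X⁻¹` on `A[X] / (X ^ n - 1)`, with `X⁻¹` written as `X ^ (n - 1)`. -/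
noncomputable def inversion : CyclicCodeRing A n →ₐ[A] CyclicCodeRing A n :=
  liftAlgHom _ (Algebra.ofId A _) (root _ ^ (n - 1)) <| by
    simp only [eval₂_sub, eval₂_X_pow, eval₂_one]
    rw [pow_right_comm, root_pow_eq_one, one_pow, sub_self]

theorem inversion_root :
    inversion (root (X ^ n - 1 : A[X])) = root (X ^ n - 1) ^ (n - 1) :=
  liftAlgHom_root ..

theorem mk_comp_X_pow_pred (q : A[X]) :
    mk (X ^ n - 1) (q.comp (X ^ (n - 1))) = inversion (mk (X ^ n - 1) q) := by
  rw [← aeval_eq, aeval_comp, aeval_X_pow, ← inversion_root, aeval_algHom_apply, aeval_eq]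

theorem root_mul_inversion_root [NeZero n] :
    root (X ^ n - 1 : A[X]) * inversion (root _) = 1 := by
  rw [inversion_root, mul_pow_sub_one (NeZero.ne n), root_pow_eq_one]

theorem inversion_inversion [NeZero n] (r : CyclicCodeRing A n) :
    inversion (inversion r) = r := by
  have inversion_comp_self :
      inversion.comp inversion = AlgHom.id A (CyclicCodeRing A n) := by
    ext
    refine (left_inv_eq_right_inv root_mul_inversion_root ?_).symm
    rw [AlgHom.comp_apply, ← map_mul, root_mul_inversion_root, map_one]
  exact DFunLike.congr_fun inversion_comp_self r

theorem monic_X_pow_sub_one [NeZero n] : (X ^ n - 1 : A[X]).Monic := by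
  simpa only [map_one] using monic_X_pow_sub_C (1 : A) (NeZero.ne n)

/-- The coefficient at `X ^ 0` of the representative of degree less than `n`. This functional turns
products in `A[X] / (X ^ n - 1)` into dot products of vectors. -/
noncomputable def coeffZero [NeZero n] : CyclicCodeRing A n →ₗ[A] A :=
  lcoeff A 0 ∘ₗ modByMonicHom monic_X_pow_sub_one

theorem coeffZero_root_pow [NeZero n] (k : ℕ) :
    coeffZero (root (X ^ n - 1 : A[X]) ^ k) = if n ∣ k then 1 else 0 := by
  nontriviality A
  have X_pow_mod : (X ^ (k % n) : A[X]) %ₘ (X ^ n - 1) = X ^ (k % n) := by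
    rw [modByMonic_eq_self_iff monic_X_pow_sub_one, degree_X_pow, ← C_1,
      degree_X_pow_sub_C (NeZero.pos n)]
    exact_mod_cast Nat.mod_lt k (NeZero.pos n)
  rw [pow_eq_pow_mod k root_pow_eq_one, ← mk_X, ← map_pow, coeffZero, LinearMap.comp_apply,
    modByMonicHom_mk, X_pow_mod, lcoeff_apply, coeff_X_pow]
  simp only [Nat.dvd_iff_mod_eq_zero, eq_comm]

theorem coeffZero_ofVec_mul_inversion_ofVec [NeZero n] (u v : Fin n → A) :
    coeffZero (ofVec u * inversion (ofVec v)) = u ⬝ᵥ v := by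
  have orthonormal (i j : Fin n) :
      coeffZero (root (X ^ n - 1 : A[X]) ^ (i : ℕ) * inversion (root _ ^ (j : ℕ))) =
        if i = j then 1 else 0 := by
    simp only [map_pow, inversion_root, ← pow_mul, ← pow_add, coeffZero_root_pow,
      dvd_val_add_pred_mul_val_iff]
  simp only [ofVec_apply, map_sum, map_smul, Finset.sum_mul_sum, smul_mul_smul_comm, orthonormal]
  simp [dotProduct]

theorem eq_zero_of_coeffZero_mul_eq_zero [NeZero n] {r : CyclicCodeRing A n}
    (hr : ∀ s, coeffZero (s * r) = 0) : r = 0 := by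
  obtain ⟨u, rfl⟩ := ofVec_surjective r
  have hu : u = 0 := by
    ext j
    rw [← dotProduct_single_one u j, ← coeffZero_ofVec_mul_inversion_ofVec, mul_comm, hr,
      Pi.zero_apply]
  rw [hu, map_zero]

theorem forall_coeffZero_mul_add_mul_eq_zero_iff [NeZero n] {r s : CyclicCodeRing A n} :
    (∀ a b, coeffZero (a * r + b * s) = 0) ↔ r = 0 ∧ s = 0 := by
  refine ⟨fun hrs => ⟨?_, ?_⟩, ?_⟩
  · exact eq_zero_of_coeffZero_mul_eq_zero fun a => by simpa using hrs a 0
  · exact eq_zero_of_coeffZero_mul_eq_zero fun b => by simpa using hrs 0 b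
  · rintro ⟨rfl, rfl⟩ a b
    simp

theorem dotProduct_sub_dotProduct_eq_coeffZero [NeZero n] {c d u v : Fin n → A}
    {g f h a b : CyclicCodeRing A n} (hu : ofVec u = a * g) (hv : ofVec v = a * f + b * h) :
    c ⬝ᵥ v - d ⬝ᵥ u =
      coeffZero (a * (f * inversion (ofVec c) - g * inversion (ofVec d)) +
        b * (inversion (ofVec c) * h)) := by
  rw [dotProduct_comm c, dotProduct_comm d, ← coeffZero_ofVec_mul_inversion_ofVec,
    ← coeffZero_ofVec_mul_inversion_ofVec, ← map_sub, hu, hv]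
  ring_nf

theorem mul_inversion_eq_zero_iff [NeZero n] {r s : CyclicCodeRing A n} :
    r * inversion s = 0 ↔ inversion r * s = 0 := by
  rw [← map_eq_zero_iff inversion (Function.LeftInverse.injective inversion_inversion), map_mul,
    inversion_inversion]

end CyclicCodeRing

theorem mkR_eq_mkR_iff {p n : ℕ} {q r : (ZMod p)[X]} :
    mkR p n q = mkR p n r ↔ AdjoinRoot.mk (X ^ n - 1) q = AdjoinRoot.mk (X ^ n - 1) r :=
  Iff.rfl

theorem mkR_eq_zero_iff {p n : ℕ} {q : (ZMod p)[X]} :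
    mkR p n q = 0 ↔ AdjoinRoot.mk (X ^ n - 1) q = 0 :=
  Iff.rfl

theorem mk_vecPoly {p n : ℕ} (u : Fin n → ZMod p) :
    AdjoinRoot.mk (X ^ n - 1) (vecPoly u) = CyclicCodeRing.ofVec u := by
  simp only [vecPoly, map_sum, adjoinRoot_mk_monomial, CyclicCodeRing.ofVec_apply]

theorem sympInner_eq_dotProduct {p n : ℕ} (u v : (Fin n → ZMod p) × (Fin n → ZMod p)) :
    sympInner u v = u.1 ⬝ᵥ v.2 - u.2 ⬝ᵥ v.1 :=
  rfl

open CyclicCodeRing in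
theorem exists_mkR_vecPoly_eq_iff {p n : ℕ} {u v : Fin n → ZMod p} {g f h : (ZMod p)[X]} :
    (∃ a b, mkR p n (vecPoly u) = mkR p n (a * g) ∧
      mkR p n (vecPoly v) = mkR p n (a * f + b * h)) ↔
    ∃ a b, ofVec u = a * AdjoinRoot.mk _ g ∧
      ofVec v = a * AdjoinRoot.mk _ f + b * AdjoinRoot.mk _ h := by
  simp only [AdjoinRoot.mk_surjective.exists, ← mk_vecPoly, ← map_mul, ← map_add, mkR_eq_mkR_iff]

open CyclicCodeRing in
theorem stmt_8_general {A : Type*} [CommRing A] {n : ℕ} [NeZero n]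
    {S : Set ((Fin n → A) × (Fin n → A))} {g f h : CyclicCodeRing A n}
    (hgen : ∀ u v, (u, v) ∈ S ↔ ∃ a b, ofVec u = a * g ∧ ofVec v = a * f + b * h)
    (c d : Fin n → A) :
    (∀ uv ∈ S, c ⬝ᵥ uv.2 - d ⬝ᵥ uv.1 = 0) ↔
      ofVec c * inversion h = 0 ∧ inversion (ofVec c) * h = 0 ∧
        g * inversion (ofVec d) = f * inversion (ofVec c) := by
  calc (∀ uv ∈ S, c ⬝ᵥ uv.2 - d ⬝ᵥ uv.1 = 0)
    _ ↔ ∀ a b, coeffZero (a * (f * inversion (ofVec c) - g * inversion (ofVec d)) +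
          b * (inversion (ofVec c) * h)) = 0 := by
      constructor
      · intro hcd a b
        obtain ⟨u, hu⟩ := ofVec_surjective (a * g)
        obtain ⟨v, hv⟩ := ofVec_surjective (a * f + b * h)
        rw [← dotProduct_sub_dotProduct_eq_coeffZero hu hv]
        exact hcd (u, v) ((hgen u v).2 ⟨a, b, hu, hv⟩)
      · rintro hτ ⟨u, v⟩ huv
        obtain ⟨a, b, hu, hv⟩ := (hgen u v).1 huv
        rw [dotProduct_sub_dotProduct_eq_coeffZero hu hv, hτ]
    _ ↔ f * inversion (ofVec c) - g * inversion (ofVec d) = 0 ∧ inversion (ofVec c) * h = 0 :=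
      forall_coeffZero_mul_add_mul_eq_zero_iff
    _ ↔ _ := by
      rw [mul_inversion_eq_zero_iff, sub_eq_zero, eq_comm, and_comm, and_self_left]

/-- Let `p` be a prime, `n` a positive integer coprime to `p` and
`S` a totally isotropic, separately cyclic linear subspace of `F_p^n × F_p^n`
generated by the triple `(g,f,h)` (with `g, h ∣ X^n − 1`).  Then the centraliser
of `S` consists exactly of those pairs `(c,d)` such that
(1) `c(X)h(X^{−1}) = c(X^{−1})h(X) = 0` in `R = F_p[X]/(X^n−1)`, and
(2) `g(X)d(X^{−1}) = f(X)c(X^{−1})` in `R`. -/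
theorem stmt_8 (p n : ℕ) [Fact p.Prime] [NeZero n] (hco : Nat.Coprime n p)
    (S : Submodule (ZMod p) ((Fin n → ZMod p) × (Fin n → ZMod p)))
    (g f h : Polynomial (ZMod p))
    (hg : g ∣ X ^ n - 1) (hh : h ∣ X ^ n - 1)
    (hiso : ∀ ab ∈ S, ∀ cd ∈ S, sympInner ab cd = 0)
    (hcyc : ∀ ab ∈ S, (shiftN ab.1, shiftN ab.2) ∈ S)
    (hgen : ∀ ab : (Fin n → ZMod p) × (Fin n → ZMod p),
      ab ∈ S ↔ ∃ a b : Polynomial (ZMod p),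
        mkR p n (vecPoly ab.1) = mkR p n (a * g) ∧
        mkR p n (vecPoly ab.2) = mkR p n (a * f + b * h)) :
    ∀ cd : (Fin n → ZMod p) × (Fin n → ZMod p),
      (∀ ab ∈ S, sympInner cd ab = 0) ↔
        (mkR p n (vecPoly cd.1 * h.comp (X ^ (n - 1))) = 0 ∧
          mkR p n ((vecPoly cd.1).comp (X ^ (n - 1)) * h) = 0 ∧
          mkR p n (g * (vecPoly cd.2).comp (X ^ (n - 1))) =
            mkR p n (f * (vecPoly cd.1).comp (X ^ (n - 1)))) := by
  intro cd
  simpa only [mkR_eq_mkR_iff, mkR_eq_zero_iff, sympInner_eq_dotProduct, map_mul, mk_vecPoly,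
    CyclicCodeRing.mk_comp_X_pow_pred, SetLike.mem_coe] using stmt_8_general (S := S)
      (fun u v => (hgen (u, v)).trans exists_mkR_vecPoly_eq_iff) cd.1 cd.2
end
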